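/- arXiv:2109.00792 — 2 statements merged into one kernel-verified Lean document; each statement's English description precedes it below -/
import Mathlib

section
/- There exists n₀ such that every graph G on n ≥ n₀ vertices with minimum degree at least 0.999 n is total weight (1,4)-choosable. -/
/-!
Choose for every edge `e = ij` an apex `k e`, that is, a common neighbour of `i` and `j`, and let
`ij` put load `1` on each of the two edges joining its ends to `k e`.

If every load is at most `r`, then `G` is total weight `(1, r + 1)`-choosable. Let
`Q = ∏_{ij ∈ E} (y_i - y_j)` in vertex variables, and let `P` arise from `Q` by substituting
`y_v = ∑_{e ∋ v} x_e`. By the combinatorial Nullstellensatz it suffices to find a monomial of `P`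
all of whose exponents are at most `r`. All monomials of the product `F` of the factors
`x_{ik} - x_{jk}`, over all edges `ij` with apex `k`, have such exponents, so it suffices that `P`
and `F` are not orthogonal for the pairing `⟨f, g⟩ = ∑_α α! f_α g_α`. Under this pairing
multiplication by a variable is adjoint to differentiation, so the substitution
`y_v = ∑_{e ∋ v} x_e` is adjoint to `x_{uv} = y_u + y_v`. The latter turns `F` into `Q`, whence
`⟨F, P⟩ = ⟨Q, Q⟩ > 0`.

To get loads at most `3`, give `V` the structure of an abelian group and start with the apex `i + j`
for the edge `ij`; the edge `ab` then has load at most `2`, as `a + j = b` and `b + j = a` have one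
solution `j` each. Since `j ↦ i + j` is a bijection, few edges `ij` fail to be completely joined to
`i + j`, and apart from a small set `X` of exceptional vertices each vertex lies on few of them.
Also call bad all edges `ij` for which `i`, `j` or `i + j` is in `X`. The bad edges get a new apex
outside `X` one at a time, in such a way that edges disjoint from `X` receive additional load at
most `1` and edges meeting `X`, which had load `0`, receive at most `3`. By counting, such an apex
is always available.
-/

/-- A total weighting (given by vertex weights `fv` and edge weights `fe`) of a simple
graph `G` is proper if for every edge `{i,j}`, the sums of the weight of the endpoint and
the weights of incident edges differ at `i` and `j`. -/
def ProperTotalWeighting {V : Type*} [Fintype V] [DecidableEq V] (G : SimpleGraph V)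
    [DecidableRel G.Adj] (fv : V → ℝ) (fe : Sym2 V → ℝ) : Prop :=
  ∀ ⦃i j : V⦄, G.Adj i j →
    fv i + ∑ e ∈ G.incidenceFinset i, fe e ≠ fv j + ∑ e ∈ G.incidenceFinset j, fe e

/-- `G` is total weight `(k, k')`-choosable: for every assignment of a set of `k` reals to
each vertex and a set of `k'` reals to each edge, there is a proper total weighting choosing
weights from the assigned sets. -/
def TotalWeightChoosable {V : Type*} [Fintype V] [DecidableEq V] (G : SimpleGraph V)
    [DecidableRel G.Adj] (k k' : ℕ) : Prop :=
  ∀ (Lv : V → Finset ℝ) (Le : Sym2 V → Finset ℝ),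
    (∀ v : V, (Lv v).card = k) → (∀ e ∈ G.edgeFinset, (Le e).card = k') →
    ∃ (fv : V → ℝ) (fe : Sym2 V → ℝ),
      (∀ v : V, fv v ∈ Lv v) ∧ (∀ e ∈ G.edgeFinset, fe e ∈ Le e) ∧
      ProperTotalWeighting G fv fe
open MvPolynomial Finset

/-! ### The factorial-weighted pairing of polynomials -/

section Pairing

variable {R σ τ : Type*} [CommSemiring R]

/-- The factorial `α! = ∏ i, (α i)!` of a multi-index. -/
def multiFactorial (α : σ →₀ ℕ) : ℕ :=
  α.prod fun _ m => m.factorial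

theorem multiFactorial_pos (α : σ →₀ ℕ) : 0 < multiFactorial α :=
  prod_pos fun i _ => (α i).factorial_pos

theorem multiFactorial_single_add (i : σ) (α : σ →₀ ℕ) :
    multiFactorial (Finsupp.single i 1 + α) = (α i + 1) * multiFactorial α := by
  unfold multiFactorial
  rw [← Finsupp.mul_prod_erase' (Finsupp.single i 1 + α) i _ fun _ => Nat.factorial_zero,
    ← Finsupp.mul_prod_erase' α i _ fun _ => Nat.factorial_zero, Finsupp.erase_add,
    Finsupp.erase_single, zero_add, Finsupp.add_apply, Finsupp.single_eq_same, add_comm 1,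
    Nat.factorial_succ, mul_assoc]

/-- The bilinear pairing `⟨f, g⟩ = ∑ α, α! f_α g_α` of polynomials, where `f_α` is the coefficient
of `x^α`. It makes multiplication by a variable adjoint to differentiation. -/
noncomputable def factorialPairing : MvPolynomial σ R →ₗ[R] MvPolynomial σ R →ₗ[R] R :=
  (basisMonomials σ R).constr R fun α => (multiFactorial α : R) • lcoeff R α

theorem factorialPairing_monomial (α : σ →₀ ℕ) (r : R) (g : MvPolynomial σ R) :
    factorialPairing (monomial α r) g = r * (multiFactorial α * coeff α g) := by
  have h : monomial α r = r • basisMonomials σ R α := by simp [smul_monomial]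
  rw [h, map_smul, factorialPairing, Module.Basis.constr_basis]
  simp

theorem factorialPairing_eq_sum (f g : MvPolynomial σ R) :
    factorialPairing f g = ∑ α ∈ f.support, coeff α f * (multiFactorial α * coeff α g) := by
  conv_lhs => rw [← support_sum_monomial_coeff f]
  simp only [map_sum, LinearMap.sum_apply, factorialPairing_monomial]

theorem factorialPairing_C (r : R) (g : MvPolynomial σ R) :
    factorialPairing (C r) g = r * constantCoeff g := by
  simp [← monomial_zero', factorialPairing_monomial, multiFactorial, constantCoeff_eq]

theorem factorialPairing_X_mul (i : σ) (f g : MvPolynomial σ R) :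
    factorialPairing (X i * f) g = factorialPairing f (pderiv i g) := by
  induction f using MvPolynomial.induction_on' with
  | add p q hp hq => simp only [mul_add, map_add, LinearMap.add_apply, hp, hq]
  | monomial α r =>
    rw [X, monomial_mul, one_mul, factorialPairing_monomial, factorialPairing_monomial,
      multiFactorial_single_add, coeff_pderiv, add_comm (Finsupp.single i 1)]
    push_cast
    ring

theorem exists_mem_support_of_factorialPairing_ne_zero {f g : MvPolynomial σ R}
    (h : factorialPairing f g ≠ 0) : ∃ α ∈ f.support, coeff α g ≠ 0 := by
  rw [factorialPairing_eq_sum] at h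
  obtain ⟨α, hα, hne⟩ := exists_ne_zero_of_sum_ne_zero h
  exact ⟨α, hα, right_ne_zero_of_mul (right_ne_zero_of_mul hne)⟩

theorem factorialPairing_self_pos {R : Type*} [CommRing R] [LinearOrder R] [IsStrictOrderedRing R]
    {f : MvPolynomial σ R} (hf : f ≠ 0) : 0 < factorialPairing f f := by
  rw [factorialPairing_eq_sum]
  refine sum_pos (fun α hα => ?_) (support_nonempty.2 hf)
  rw [mul_left_comm]
  exact mul_pos (Nat.cast_pos.2 (multiFactorial_pos α)) (mul_self_pos.2 (mem_support_iff.1 hα))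

theorem pderiv_bind₁ [Fintype τ] (f : τ → MvPolynomial σ R) (p : MvPolynomial τ R) (i : σ) :
    pderiv i (bind₁ f p) = ∑ j, bind₁ f (pderiv j p) * pderiv i (f j) := by
  classical
  induction p using MvPolynomial.induction_on with
  | C r => simp [algebraMap_eq]
  | add p q hp hq => simp only [map_add, hp, hq, add_mul, sum_add_distrib]
  | mul_X p k hp =>
    simp only [map_mul, Derivation.leibniz, bind₁_X_right, hp, pderiv_X, smul_eq_mul, map_add,
      add_mul, sum_add_distrib, mul_sum]
    congr 1
    · simp [Pi.single_apply]
    · simp only [mul_assoc]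

theorem pderiv_toMvPolynomial [Fintype σ] (M : Matrix τ σ R) (j : τ) (i : σ) :
    pderiv i (M.toMvPolynomial j) = C (M j i) := by
  classical
  simp [Matrix.toMvPolynomial, ← C_mul_X_eq_monomial, pderiv_X, Pi.single_apply]

theorem constantCoeff_bind₁_toMvPolynomial [Fintype σ] (M : Matrix τ σ R) (p : MvPolynomial τ R) :
    constantCoeff (bind₁ M.toMvPolynomial p) = constantCoeff p := by
  induction p using MvPolynomial.induction_on <;> simp_all [algebraMap_eq]

theorem factorialPairing_bind₁_transpose [Fintype σ] [Fintype τ] (M : Matrix τ σ R)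
    (p : MvPolynomial σ R) (q : MvPolynomial τ R) :
    factorialPairing (bind₁ M.transpose.toMvPolynomial p) q
      = factorialPairing p (bind₁ M.toMvPolynomial q) := by
  induction p using MvPolynomial.induction_on generalizing q with
  | C r => rw [bind₁_C_right, factorialPairing_C, factorialPairing_C,
      constantCoeff_bind₁_toMvPolynomial]
  | add p p' hp hp' => simp only [map_add, LinearMap.add_apply, hp, hp']
  | mul_X p i hp =>
    calc factorialPairing (bind₁ M.transpose.toMvPolynomial (p * X i)) q
        = ∑ j, M j i * factorialPairing (X j * bind₁ M.transpose.toMvPolynomial p) q := by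
          simp [Matrix.toMvPolynomial, ← C_mul_X_eq_monomial, mul_comm, sum_mul, mul_assoc,
            ← smul_eq_C_mul]
      _ = ∑ j, M j i * factorialPairing p (bind₁ M.toMvPolynomial (pderiv j q)) := by
          simp only [factorialPairing_X_mul, hp]
      _ = factorialPairing (p * X i) (bind₁ M.toMvPolynomial q) := by
          simp [mul_comm _ (X i), factorialPairing_X_mul, pderiv_bind₁, pderiv_toMvPolynomial,
            mul_comm _ (C _), ← smul_eq_C_mul]

end Pairing

section Nullstellensatz

variable {R σ ι : Type*} [CommRing R]

theorem coeff_prod_add_C (s : Finset ι) (l : ι → MvPolynomial σ R) (c : ι → R)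
    (hl : ∀ i ∈ s, (l i).IsHomogeneous 1) {α : σ →₀ ℕ} (hα : α.degree = #s) :
    coeff α (∏ i ∈ s, (l i + C (c i))) = coeff α (∏ i ∈ s, l i) := by
  classical
  rw [prod_add, coeff_sum, sum_eq_single_of_mem s (mem_powerset_self s) fun t ht hne => ?_]
  · simp
  · have hcard : #t < #s := card_lt_card ((mem_powerset.1 ht).ssubset_of_ne hne)
    have hhom := IsHomogeneous.prod t l (fun _ => 1) fun i hi => hl i (mem_powerset.1 ht hi)
    rw [← map_prod, mul_comm, coeff_C_mul, hhom.coeff_eq_zero (by simp; omega), mul_zero]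

theorem totalDegree_prod_add_C_le (s : Finset ι) (l : ι → MvPolynomial σ R) (c : ι → R)
    (hl : ∀ i ∈ s, (l i).IsHomogeneous 1) : (∏ i ∈ s, (l i + C (c i))).totalDegree ≤ #s := by
  rw [card_eq_sum_ones]
  refine (totalDegree_finsetProd _ _).trans (sum_le_sum fun i hi => (totalDegree_add _ _).trans ?_)
  simp [(hl i hi).totalDegree_le]

/-- The constants `c i` are free because only top-degree coefficients matter. -/
theorem exists_forall_eval_add_ne_zero [IsDomain R] [Finite σ] (s : Finset ι)
    (l : ι → MvPolynomial σ R) (c : ι → R) (hl : ∀ i ∈ s, (l i).IsHomogeneous 1) {α : σ →₀ ℕ}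
    (hα : coeff α (∏ i ∈ s, l i) ≠ 0) (S : σ → Finset R) (hS : ∀ j, α j < #(S j)) :
    ∃ x : σ → R, (∀ j, x j ∈ S j) ∧ ∀ i ∈ s, eval x (l i) + c i ≠ 0 := by
  have hdeg : α.degree = #s := by
    by_contra hne
    have hhom := IsHomogeneous.prod s l (fun _ => 1) hl
    exact hα (hhom.coeff_eq_zero (by simpa using hne))
  have hcoeff : coeff α (∏ i ∈ s, (l i + C (c i))) ≠ 0 := by
    rwa [coeff_prod_add_C s l c hl hdeg]
  have htotal : (∏ i ∈ s, (l i + C (c i))).totalDegree = α.degree :=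
    (hdeg ▸ totalDegree_prod_add_C_le s l c hl).antisymm
      (le_totalDegree (mem_support_iff.2 hcoeff))
  obtain ⟨x, hx, hne⟩ :=
    combinatorial_nullstellensatz_exists_eval_nonzero _ α hcoeff htotal S hS
  refine ⟨x, hx, fun i hi => ?_⟩
  rw [map_prod] at hne
  simpa only [map_add, eval_C] using prod_ne_zero_iff.1 hne i hi

end Nullstellensatz

/-! ### Apex choices and total weight choosability -/

section Apex

variable {V : Type*}

/-- Every edge `e ∈ E` is completely joined in `G` to its apex `k e`. -/
def IsApexChoice (G : SimpleGraph V) (E : Finset (Sym2 V)) (k : Sym2 V → V) : Prop :=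
  ∀ e ∈ E, ∀ v ∈ e, G.Adj v (k e)

/-- When each `e ∈ E` puts load `1` on the two pairs joining its ends to its apex `k e`, this is the
total load on the pair `f`. -/
def apexLoad [Fintype V] [DecidableEq V] (k : Sym2 V → V) (E : Finset (Sym2 V)) (f : Sym2 V) : ℕ :=
  #{e ∈ E | ∃ v ∈ e, s(v, k e) = f}

theorem IsApexChoice.apexLoad_eq_zero [Fintype V] [DecidableEq V] {G : SimpleGraph V}
    {E : Finset (Sym2 V)} {k : Sym2 V → V} (hk : IsApexChoice G E k) {f : Sym2 V}
    (hf : f ∉ G.edgeSet) : apexLoad k E f = 0 := by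
  refine card_eq_zero.2 (filter_eq_empty_iff.2 ?_)
  rintro e he ⟨v, hv, rfl⟩
  exact hf (hk e he v hv)

end Apex

section IncidenceMatrix

variable {V R : Type*} [Fintype V] [DecidableEq V] [CommSemiring R] (G : SimpleGraph V)
  [DecidableRel G.Adj]

variable {G} in
theorem toMvPolynomial_incMatrix_transpose {a b : V} (hab : G.Adj a b) :
    (G.incMatrix R).transpose.toMvPolynomial s(a, b) = X a + X b := by
  rw [Matrix.toMvPolynomial, sum_eq_add_of_mem a b (mem_univ _) (mem_univ _) hab.ne]
  · simp [SimpleGraph.incMatrix_apply', SimpleGraph.mk'_mem_incidenceSet_iff, hab, X]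
  · intro c _ hc
    simp [SimpleGraph.incMatrix_apply', SimpleGraph.mk'_mem_incidenceSet_iff, hc.1, hc.2]

theorem eval_toMvPolynomial_incMatrix (x : Sym2 V → R) (v : V) :
    eval x ((G.incMatrix R).toMvPolynomial v) = ∑ e ∈ G.incidenceFinset v, x e := by
  rw [Matrix.toMvPolynomial_eval_eq_apply]
  simp [Matrix.mulVec, dotProduct, SimpleGraph.incMatrix_apply', ← sum_filter,
    SimpleGraph.incidenceFinset, Set.filter_mem_univ_eq_toFinset]

end IncidenceMatrix

section GraphPolynomial

variable {V : Type*} (R : Type*) [CommRing R] (G : SimpleGraph V)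

theorem out_fst_adj_out_snd {G : SimpleGraph V} {e : Sym2 V} (he : e ∈ G.edgeSet) :
    G.Adj e.out.1 e.out.2 := by
  rwa [← SimpleGraph.mem_edgeSet, Sym2.mk, Quot.out_eq]

variable [Fintype G.edgeSet]

/-- The graph polynomial `∏ ij ∈ E(G), (x_i - x_j)`; its sign depends on the orientation of the
edges, for which we take the one given by `Quot.out`. -/
noncomputable def graphPolynomial : MvPolynomial V R :=
  ∏ e ∈ G.edgeFinset, (X e.out.1 - X e.out.2)

/-- The polynomial `∏ e ∈ E(G), (x_{ik} - x_{jk})` in edge variables, where `e = ij` has apex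
`k = k e`. It uses the same orientation of the edges as `graphPolynomial`. -/
noncomputable def apexPolynomial (k : Sym2 V → V) : MvPolynomial (Sym2 V) R :=
  ∏ e ∈ G.edgeFinset, (X s(e.out.1, k e) - X s(e.out.2, k e))

theorem graphPolynomial_ne_zero [IsDomain R] : graphPolynomial R G ≠ 0 :=
  prod_ne_zero_iff.2 fun _ he => sub_ne_zero.2 fun h =>
    (out_fst_adj_out_snd (SimpleGraph.mem_edgeFinset.1 he)).ne (X_injective h)

variable [Fintype V] [DecidableEq V]

theorem degreeOf_apexPolynomial_le [Nontrivial R] (k : Sym2 V → V) (f : Sym2 V) :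
    degreeOf f (apexPolynomial R G k) ≤ apexLoad k G.edgeFinset f := by
  rw [apexLoad, card_filter]
  refine (degreeOf_prod_le _ _ _).trans (sum_le_sum fun e _ => (degreeOf_sub_le _ _ _).trans ?_)
  rw [degreeOf_X, degreeOf_X]
  have h₁ := e.out_fst_mem
  have h₂ := e.out_snd_mem
  split_ifs <;> grind

variable [DecidableRel G.Adj]

variable {G} in
theorem bind₁_incMatrix_transpose_apexPolynomial {k : Sym2 V → V}
    (hk : IsApexChoice G G.edgeFinset k) :
    bind₁ (G.incMatrix R).transpose.toMvPolynomial (apexPolynomial R G k)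
      = graphPolynomial R G := by
  simp only [apexPolynomial, graphPolynomial, map_prod, map_sub, bind₁_X_right]
  refine prod_congr rfl fun e he => ?_
  rw [toMvPolynomial_incMatrix_transpose (hk e he _ e.out_fst_mem),
    toMvPolynomial_incMatrix_transpose (hk e he _ e.out_snd_mem), add_sub_add_right_eq_sub]

variable {G} in
theorem exists_mem_support_apexPolynomial [LinearOrder R] [IsStrictOrderedRing R]
    {k : Sym2 V → V} (hk : IsApexChoice G G.edgeFinset k) :
    ∃ α ∈ (apexPolynomial R G k).support,
      coeff α (bind₁ (G.incMatrix R).toMvPolynomial (graphPolynomial R G)) ≠ 0 := by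
  apply exists_mem_support_of_factorialPairing_ne_zero
  rw [← factorialPairing_bind₁_transpose, bind₁_incMatrix_transpose_apexPolynomial R hk]
  exact (factorialPairing_self_pos (graphPolynomial_ne_zero R G)).ne'

end GraphPolynomial

section Choosability

variable {V : Type*} [Fintype V] [DecidableEq V] {G : SimpleGraph V} [DecidableRel G.Adj]

theorem properTotalWeighting_of_forall_out {fv : V → ℝ} {fe : Sym2 V → ℝ}
    (h : ∀ e ∈ G.edgeFinset,
      fv e.out.1 + ∑ f ∈ G.incidenceFinset e.out.1, fe f
        ≠ fv e.out.2 + ∑ f ∈ G.incidenceFinset e.out.2, fe f) :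
    ProperTotalWeighting G fv fe := by
  intro i j hij
  have hne := h s(i, j) (SimpleGraph.mem_edgeFinset.2 hij)
  have hout : s((Quot.out s(i, j)).1, (Quot.out s(i, j)).2) = s(i, j) := Quot.out_eq _
  rcases Sym2.eq_iff.1 hout with ⟨h₁, h₂⟩ | ⟨h₁, h₂⟩ <;> rw [h₁, h₂] at hne
  exacts [hne, hne.symm]

theorem IsApexChoice.totalWeightChoosable {k : Sym2 V → V} (hk : IsApexChoice G G.edgeFinset k)
    {r : ℕ} (hload : ∀ f, apexLoad k G.edgeFinset f ≤ r) : TotalWeightChoosable G 1 (r + 1) := by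
  intro Lv Le hLv hLe
  have hLv_nonempty : ∀ v, (Lv v).Nonempty := fun v => card_pos.1 (by simp [hLv v])
  choose fv hfv using hLv_nonempty
  obtain ⟨α, hα, hcoeff⟩ := exists_mem_support_apexPolynomial ℝ hk
  have hα_le : ∀ f, α f ≤ apexLoad k G.edgeFinset f := fun f =>
    (monomial_le_degreeOf f hα).trans (degreeOf_apexPolynomial_le ℝ G k f)
  have hlists : ∀ f, α f < #(if f ∈ G.edgeFinset then Le f else {0}) := by
    intro f
    split_ifs with hf
    · rw [hLe f hf]
      exact Nat.lt_succ_of_le ((hα_le f).trans (hload f))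
    · simpa [hk.apexLoad_eq_zero (mt SimpleGraph.mem_edgeFinset.2 hf)] using hα_le f
  simp only [graphPolynomial, map_prod, map_sub, bind₁_X_right] at hcoeff
  obtain ⟨fe, hfe, hne⟩ := exists_forall_eval_add_ne_zero G.edgeFinset _
    (fun e => fv e.out.1 - fv e.out.2)
    (fun e _ => ((G.incMatrix ℝ).toMvPolynomial_isHomogeneous _).sub
      ((G.incMatrix ℝ).toMvPolynomial_isHomogeneous _)) hcoeff _ hlists
  refine ⟨fv, fe, hfv, fun e he => by simpa [he] using hfe e,
    properTotalWeighting_of_forall_out fun e he heq => hne e he ?_⟩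
  rw [map_sub, eval_toMvPolynomial_incMatrix, eval_toMvPolynomial_incMatrix]
  linarith

end Choosability

/-! ### Greedy choice of apexes -/

section ApexLoad

variable {V : Type*} [Fintype V] [DecidableEq V] (k : Sym2 V → V) (E : Finset (Sym2 V))

theorem card_filter_mem_edge (a : V) :
    #{e ∈ E | a ∈ e} = #{b | s(a, b) ∈ E} := by
  refine (card_bij (fun b _ => s(a, b)) ?_ ?_ ?_).symm
  · simp
  · intro b _ c _ h
    exact Sym2.congr_right.1 h
  · intro e he
    obtain ⟨heE, b, rfl⟩ := mem_filter.1 he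
    exact ⟨b, by simpa using heE, rfl⟩

theorem sum_card_filter_mem_edge :
    ∑ a, #{e ∈ E | a ∈ e} = ∑ e ∈ E, #e.toFinset := by
  have h := sum_card_bipartiteAbove_eq_sum_card_bipartiteBelow (s := univ) (t := E)
    fun (a : V) (e : Sym2 V) => a ∈ e
  simpa [bipartiteAbove, bipartiteBelow, ← Sym2.mem_toFinset] using h

theorem sum_card_filter_mem_edge_le :
    ∑ a, #{e ∈ E | a ∈ e} ≤ 2 * #E := by
  rw [sum_card_filter_mem_edge, mul_comm]
  refine sum_le_card_nsmul _ _ _ fun e _ => ?_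
  rw [Sym2.card_toFinset]
  split_ifs <;> simp

theorem apexLoad_mk_le (a b : V) :
    apexLoad k E s(a, b) ≤ #{e ∈ E | a ∈ e ∧ k e = b} + #{e ∈ E | k e = a ∧ b ∈ e} := by
  refine (card_le_card fun e he => ?_).trans (card_union_le _ _)
  obtain ⟨heE, v, hv, heq⟩ := mem_filter.1 he
  rw [mem_union, mem_filter, mem_filter]
  rcases Sym2.eq_iff.1 heq with ⟨rfl, h⟩ | ⟨rfl, h⟩
  · exact Or.inl ⟨heE, hv, h⟩
  · exact Or.inr ⟨heE, h, hv⟩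

theorem sum_apexLoad_mk_le (a : V) :
    ∑ b, apexLoad k E s(a, b) ≤ #{e ∈ E | a ∈ e} + 2 * #{e ∈ E | k e = a} := by
  refine (sum_le_sum fun b _ => apexLoad_mk_le k E a b).trans ?_
  rw [sum_add_distrib]
  gcongr
  · rw [card_eq_sum_card_fiberwise (f := k) (t := univ) fun _ _ => mem_coe.2 (mem_univ _)]
    simp only [filter_filter, le_refl]
  · simpa only [filter_filter] using sum_card_filter_mem_edge_le {e ∈ E | k e = a}

variable {k E}

theorem apexLoad_insert_update {e : Sym2 V} (he : e ∉ E) (x : V) (f : Sym2 V) :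
    apexLoad (Function.update k e x) (insert e E) f
      = apexLoad k E f + if ∃ v ∈ e, s(v, x) = f then 1 else 0 := by
  have hcongr : ∀ e' ∈ E, Function.update k e x e' = k e' := fun e' he' =>
    Function.update_of_ne (ne_of_mem_of_not_mem he' he) _ _
  have hfilter : {e' ∈ E | ∃ v ∈ e', s(v, Function.update k e x e') = f}
      = {e' ∈ E | ∃ v ∈ e', s(v, k e') = f} :=
    filter_congr fun e' he' => by rw [hcongr e' he']
  rw [apexLoad, filter_insert, Function.update_self, hfilter]
  split_ifs
  · rw [card_insert_of_notMem (by simp [he]), apexLoad]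
  · rfl

theorem apexLoad_piecewise_le (R : Finset (Sym2 V)) (k' : Sym2 V → V) (f : Sym2 V) :
    apexLoad (R.piecewise k k') E f ≤ apexLoad k R f + apexLoad k' (E \ R) f := by
  refine (card_le_card fun e he => ?_).trans (card_union_le _ _)
  rw [mem_filter] at he
  by_cases heR : e ∈ R <;> simp_all

end ApexLoad

section Greedy

variable {V : Type*} [Fintype V] [DecidableEq V]

/-- The load that a pair `f` may receive from the greedy choice of apexes: no total load may exceed
`3`, and pairs disjoint from `X` already carry up to `2` from the edges that keep the apex
`i + j`. -/
def capacity (X : Finset V) (f : Sym2 V) : ℕ :=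
  if ∃ v ∈ f, v ∈ X then 3 else 1

/-- The invariant of the greedy choice: the edges in `R` have apexes outside `X`, each vertex is the
apex of at most `m` of them, and no load exceeds its capacity. -/
structure IsBalancedApexChoice (G : SimpleGraph V) (X : Finset V) (m : ℕ) (R : Finset (Sym2 V))
    (k : Sym2 V → V) : Prop where
  isApexChoice : IsApexChoice G R k
  apex_notMem : ∀ e ∈ R, k e ∉ X
  card_apex_le : ∀ b, #{e ∈ R | k e = b} ≤ m
  apexLoad_le : ∀ f, apexLoad k R f ≤ capacity X f

namespace IsBalancedApexChoice

variable {G : SimpleGraph V} {X : Finset V} {m : ℕ} {R : Finset (Sym2 V)} {k : Sym2 V → V}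

theorem insert_update (h : IsBalancedApexChoice G X m R k) {e : Sym2 V} (he : e ∉ R) {x : V}
    (hxX : x ∉ X) (hadj : ∀ v ∈ e, G.Adj v x) (hxm : #{e' ∈ R | k e' = x} < m)
    (hload : ∀ v ∈ e, apexLoad k R s(v, x) < capacity X s(v, x)) :
    IsBalancedApexChoice G X m (insert e R) (Function.update k e x) := by
  have hcongr : ∀ e' ∈ R, Function.update k e x e' = k e' := fun e' he' =>
    Function.update_of_ne (ne_of_mem_of_not_mem he' he) _ _
  refine ⟨?_, ?_, fun b => ?_, fun f => ?_⟩
  · intro e' he'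
    rcases mem_insert.1 he' with rfl | he'
    · simpa using hadj
    · simpa [hcongr e' he'] using h.isApexChoice e' he'
  · intro e' he'
    rcases mem_insert.1 he' with rfl | he'
    · simpa using hxX
    · simpa [hcongr e' he'] using h.apex_notMem e' he'
  · rw [filter_insert, Function.update_self, filter_congr fun e' he' => by rw [hcongr e' he']]
    split_ifs with hx
    · subst hx
      exact (card_insert_le _ _).trans hxm
    · exact h.card_apex_le b
  · rw [apexLoad_insert_update he]
    split_ifs with hf
    · obtain ⟨v, hv, rfl⟩ := hf
      exact hload v hv
    · exact h.apexLoad_le f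

theorem card_saturated_le (h : IsBalancedApexChoice G X m R k) {s : ℕ}
    (hs : Fintype.card V ≤ 3 * s) (hdeg : ∀ a ∉ X, #{e ∈ R | a ∈ e} + 2 * m ≤ s) (a : V) :
    #{b | capacity X s(a, b) ≤ apexLoad k R s(a, b)} ≤ s := by
  have hsum (c : ℕ) (hc : ∀ b, c ≤ capacity X s(a, b)) :
      #{b | capacity X s(a, b) ≤ apexLoad k R s(a, b)} * c
        ≤ #{e ∈ R | a ∈ e} + 2 * #{e ∈ R | k e = a} :=
    calc _ ≤ ∑ b with capacity X s(a, b) ≤ apexLoad k R s(a, b), apexLoad k R s(a, b) :=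
          card_nsmul_le_sum _ _ _ fun b hb => (hc b).trans (mem_filter.1 hb).2
      _ ≤ ∑ b, apexLoad k R s(a, b) := sum_le_sum_of_subset (subset_univ _)
      _ ≤ _ := sum_apexLoad_mk_le k R a
  by_cases ha : a ∈ X
  · have hapex : #{e ∈ R | k e = a} = 0 := card_eq_zero.2 <| filter_eq_empty_iff.2
      fun e he hea => h.apex_notMem e he (hea ▸ ha)
    have hincident : #{e ∈ R | a ∈ e} ≤ Fintype.card V := by
      rw [card_filter_mem_edge]
      exact card_le_univ _
    have := hsum 3 fun _ => by simp [capacity, ha]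
    omega
  · have := hsum 1 fun _ => by unfold capacity; split_ifs <;> simp
    have := hdeg a ha
    have := h.card_apex_le a
    omega

end IsBalancedApexChoice

theorem card_overused_mul_le {ι : Type*} (k : ι → V) (R : Finset ι) (m : ℕ) :
    #{b | m ≤ #{e ∈ R | k e = b}} * m ≤ #R :=
  calc _ ≤ ∑ b with m ≤ #{e ∈ R | k e = b}, #{e ∈ R | k e = b} :=
        card_nsmul_le_sum _ _ _ fun _ hb => (mem_filter.1 hb).2
    _ ≤ ∑ b, #{e ∈ R | k e = b} := sum_le_sum_of_subset (subset_univ _)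
    _ = #R := (card_eq_sum_card_fiberwise fun _ _ => mem_coe.2 (mem_univ _)).symm

variable {G : SimpleGraph V} [DecidableRel G.Adj] {X : Finset V} {R : Finset (Sym2 V)}
  {m s h ν : ℕ}

theorem IsBalancedApexChoice.exists_insert {k : Sym2 V → V} (hk : IsBalancedApexChoice G X m R k)
    (hν : ∀ a, #{b | ¬ G.Adj a b} ≤ ν) (hs : Fintype.card V ≤ 3 * s)
    (hdeg : ∀ a ∉ X, #{e ∈ R | a ∈ e} + 2 * m ≤ s) (hR : #R < h * m)
    (hcount : #X + 2 * ν + h + 2 * s ≤ Fintype.card V) {e : Sym2 V} (he : e ∉ R) :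
    ∃ k', IsBalancedApexChoice G X m (insert e R) k' := by
  induction e using Sym2.ind with | _ i j
  let nonadj (a : V) : Finset V := {b | ¬ G.Adj a b}
  have hnonadj (a : V) : #(nonadj a) ≤ ν := hν a
  let saturated (a : V) : Finset V := {b | capacity X s(a, b) ≤ apexLoad k R s(a, b)}
  let overused : Finset V := {b | m ≤ #{e ∈ R | k e = b}}
  have hoverused : #overused < h :=
    lt_of_mul_lt_mul_right ((card_overused_mul_le k R m).trans_lt hR) (Nat.zero_le m)
  have hsaturated (a : V) : #(saturated a) ≤ s := hk.card_saturated_le hs hdeg a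
  obtain ⟨x, hx⟩ : ∃ x,
      x ∉ X ∪ (nonadj i ∪ nonadj j) ∪ overused ∪ (saturated i ∪ saturated j) := by
    by_contra! hall
    have := hnonadj i
    have := hnonadj j
    have := hsaturated i
    have := hsaturated j
    have := card_union_le (X ∪ (nonadj i ∪ nonadj j) ∪ overused) (saturated i ∪ saturated j)
    have := card_union_le (X ∪ (nonadj i ∪ nonadj j)) overused
    have := card_union_le X (nonadj i ∪ nonadj j)
    have := card_union_le (nonadj i) (nonadj j)
    have := card_union_le (saturated i) (saturated j)
    have := card_univ (α := V) ▸ card_le_card fun x _ => hall x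
    omega
  simp only [mem_union, not_or, nonadj, saturated, overused, mem_filter_univ, not_not, not_le] at hx
  obtain ⟨⟨⟨hxX, hxi, hxj⟩, hxm⟩, hsi, hsj⟩ := hx
  exact ⟨_, hk.insert_update he hxX (by simp [hxi, hxj]) hxm (by simp [hsi, hsj])⟩

theorem exists_isBalancedApexChoice (hν : ∀ a, #{b | ¬ G.Adj a b} ≤ ν)
    (hs : Fintype.card V ≤ 3 * s) (hdeg : ∀ a ∉ X, #{e ∈ R | a ∈ e} + 2 * m ≤ s)
    (hR : #R < h * m) (hcount : #X + 2 * ν + h + 2 * s ≤ Fintype.card V) :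
    ∃ k, IsBalancedApexChoice G X m R k := by
  induction R using Finset.induction_on with
  | empty =>
    have hh : 0 < h := Nat.pos_of_ne_zero fun hh => by simp [hh] at hR
    have : Nonempty V := Fintype.card_pos_iff.1 (by omega)
    exact ⟨fun _ => Classical.arbitrary V, by simp [IsApexChoice], by simp, by simp,
      by simp [apexLoad]⟩
  | insert e R he ih =>
    have hdeg' : ∀ a ∉ X, #{e ∈ R | a ∈ e} + 2 * m ≤ s := fun a ha =>
      (Nat.add_le_add_right (card_le_card (filter_subset_filter _ (subset_insert e R))) _).trans
        (hdeg a ha)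
    have hR' : #R < h * m := (card_le_card (subset_insert e R)).trans_lt hR
    obtain ⟨k, hk⟩ := ih hdeg' hR'
    exact hk.exists_insert hν hs hdeg' hR' hcount he

end Greedy

/-! ### The apexes `i + j` and the bad edges -/

section BadEdges

variable {V : Type*} [AddCommMagma V] [Fintype V] [DecidableEq V] (G : SimpleGraph V)
  [DecidableRel G.Adj] (X : Finset V)

/-- The edges `ij` of `G` for which one of `i`, `j`, `i + j` lies in `X` or `i + j` is not a common
neighbour of `i` and `j`. All other edges keep the apex `i + j`. -/
def badEdges : Finset (Sym2 V) :=
  {e ∈ G.edgeFinset | ¬ (e.add ∉ X ∧ ∀ v ∈ e, v ∉ X ∧ G.Adj v e.add)}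

variable {G X}

theorem add_of_mem_sdiff_badEdges {e : Sym2 V} (he : e ∈ G.edgeFinset \ badEdges G X) :
    e.add ∉ X ∧ ∀ v ∈ e, v ∉ X ∧ G.Adj v e.add := by
  by_contra h
  obtain ⟨heG, hebad⟩ := mem_sdiff.1 he
  exact hebad (mem_filter.2 ⟨heG, h⟩)

theorem IsApexChoice.piecewise_badEdges {k : Sym2 V → V} (hk : IsApexChoice G (badEdges G X) k) :
    IsApexChoice G G.edgeFinset ((badEdges G X).piecewise k Sym2.add) := by
  intro e he v hv
  by_cases hbad : e ∈ badEdges G X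
  · rw [piecewise_eq_of_mem _ _ _ hbad]
    exact hk e hbad v hv
  · rw [piecewise_eq_of_notMem _ _ _ hbad]
    exact ((add_of_mem_sdiff_badEdges (mem_sdiff.2 ⟨he, hbad⟩)).2 v hv).2

end BadEdges

section ApexSum

variable {V : Type*} [AddCommMagma V] [IsLeftCancelAdd V]

theorem card_filter_mem_sum_eq_le_one [DecidableEq V] (E : Finset (Sym2 V)) (a b : V) :
    #{e ∈ E | a ∈ e ∧ e.add = b} ≤ 1 := by
  refine card_le_one.2 fun e he e' he' => ?_
  obtain ⟨-, ⟨j, rfl⟩, hj⟩ := mem_filter.1 he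
  obtain ⟨-, ⟨j', rfl⟩, hj'⟩ := mem_filter.1 he'
  exact Sym2.congr_right.2 (add_left_cancel (hj.trans hj'.symm))

theorem apexLoad_add_le_two [Fintype V] [DecidableEq V] (E : Finset (Sym2 V)) (f : Sym2 V) :
    apexLoad Sym2.add E f ≤ 2 := by
  induction f using Sym2.ind with | _ a b
  calc apexLoad Sym2.add E s(a, b)
      ≤ #{e ∈ E | a ∈ e ∧ e.add = b} + #{e ∈ E | b ∈ e ∧ e.add = a} := by
        simpa only [and_comm] using apexLoad_mk_le Sym2.add E a b
    _ ≤ 1 + 1 := Nat.add_le_add (card_filter_mem_sum_eq_le_one E a b)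
        (card_filter_mem_sum_eq_le_one E b a)

variable [Fintype V]

theorem card_filter_add_left_le (a : V) (p : V → Prop) [DecidablePred p] :
    #{b | p (a + b)} ≤ #{c | p c} :=
  card_le_card_of_injOn (a + ·) (by simp [Set.MapsTo]) (add_right_injective a).injOn

variable (G : SimpleGraph V) [DecidableRel G.Adj] {ν : ℕ}

theorem sum_card_not_adj_add_le (hν : ∀ a, #{b | ¬ G.Adj a b} ≤ ν) :
    ∑ i, #{j | ¬ G.Adj j (i + j)} ≤ Fintype.card V * ν :=
  calc ∑ i, #{j | ¬ G.Adj j (i + j)} = ∑ j, #{i | ¬ G.Adj j (i + j)} :=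
        sum_card_bipartiteAbove_eq_sum_card_bipartiteBelow fun i j => ¬ G.Adj j (i + j)
    _ ≤ ∑ _j : V, ν := sum_le_sum fun j _ => by
        simp only [add_comm _ j]
        exact (card_filter_add_left_le j fun c => ¬ G.Adj j c).trans (hν j)
    _ = Fintype.card V * ν := by simp

/-- The vertices `i` such that more than `t` vertices `j` are not adjacent to `i + j`. -/
def exceptionalVertices (t : ℕ) : Finset V :=
  {i | t < #{j | ¬ G.Adj j (i + j)}}

theorem card_exceptionalVertices_mul_le (hν : ∀ a, #{b | ¬ G.Adj a b} ≤ ν) (t : ℕ) :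
    #(exceptionalVertices G t) * (t + 1) ≤ Fintype.card V * ν :=
  calc #(exceptionalVertices G t) * (t + 1)
      ≤ ∑ i ∈ exceptionalVertices G t, #{j | ¬ G.Adj j (i + j)} :=
        card_nsmul_le_sum _ _ _ fun _ hi => Nat.succ_le_of_lt (mem_filter.1 hi).2
    _ ≤ ∑ i, #{j | ¬ G.Adj j (i + j)} := sum_le_sum_of_subset (subset_univ _)
    _ ≤ Fintype.card V * ν := sum_card_not_adj_add_le G hν

variable [DecidableEq V] (X : Finset V)

theorem capacity_add_apexLoad_add_le_three (f : Sym2 V) :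
    capacity X f + apexLoad Sym2.add (G.edgeFinset \ badEdges G X) f ≤ 3 := by
  unfold capacity
  split_ifs with hf
  · obtain ⟨w, hwf, hwX⟩ := hf
    suffices apexLoad Sym2.add (G.edgeFinset \ badEdges G X) f = 0 by omega
    refine card_eq_zero.2 (filter_eq_empty_iff.2 ?_)
    rintro e he ⟨v, hv, rfl⟩
    obtain ⟨hapex, hends⟩ := add_of_mem_sdiff_badEdges he
    rcases Sym2.mem_iff.1 hwf with rfl | rfl
    exacts [(hends w hv).1 hwX, hapex hwX]
  · have := apexLoad_add_le_two (G.edgeFinset \ badEdges G X) f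
    omega

variable {G X}

theorem card_badEdges_incident_le (hν : ∀ a, #{b | ¬ G.Adj a b} ≤ ν) {a : V} (ha : a ∉ X) :
    #{e ∈ badEdges G X | a ∈ e} ≤ 2 * #X + ν + #{j | ¬ G.Adj j (a + j)} := by
  have hsub : ({j | s(a, j) ∈ badEdges G X} : Finset V) ⊆
      X ∪ ({j | a + j ∈ X} : Finset V) ∪ ({j | ¬ G.Adj a (a + j)} : Finset V)
        ∪ ({j | ¬ G.Adj j (a + j)} : Finset V) := by
    intro j hj
    simp only [badEdges, mem_filter, Sym2.add_mk, Sym2.mem_iff] at hj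
    simp only [mem_union, mem_filter_univ]
    grind
  have hsum : #{j | a + j ∈ X} ≤ #X := by simpa using card_filter_add_left_le a (· ∈ X)
  have hnonadj : #{j | ¬ G.Adj a (a + j)} ≤ ν :=
    (card_filter_add_left_le a fun c => ¬ G.Adj a c).trans (hν a)
  rw [card_filter_mem_edge]
  grw [hsub, card_union_le, card_union_le, card_union_le, hsum, hnonadj, two_mul]

theorem two_mul_card_badEdges_le (hν : ∀ a, #{b | ¬ G.Adj a b} ≤ ν) :
    2 * #(badEdges G X) ≤ Fintype.card V * (3 * #X + 2 * ν) := by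
  have hedge : ∀ e ∈ badEdges G X, #e.toFinset = 2 := fun e he =>
    Sym2.card_toFinset_of_not_isDiag e (G.not_isDiag_of_mem_edgeFinset (mem_filter.1 he).1)
  have hterm (a : V) : #{e ∈ badEdges G X | a ∈ e}
      ≤ (if a ∈ X then Fintype.card V else 0) + (2 * #X + ν + #{j | ¬ G.Adj j (a + j)}) := by
    split_ifs with ha
    · rw [card_filter_mem_edge]
      exact (card_le_univ _).trans (Nat.le_add_right _ _)
    · exact (card_badEdges_incident_le hν ha).trans (Nat.le_add_left _ _)
  calc 2 * #(badEdges G X) = ∑ a, #{e ∈ badEdges G X | a ∈ e} := by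
        rw [sum_card_filter_mem_edge, sum_congr rfl hedge, sum_const, smul_eq_mul, mul_comm]
    _ ≤ ∑ a, ((if a ∈ X then Fintype.card V else 0)
          + (2 * #X + ν + #{j | ¬ G.Adj j (a + j)})) := sum_le_sum fun a _ => hterm a
    _ = #X * Fintype.card V + Fintype.card V * (2 * #X + ν)
          + ∑ a, #{j | ¬ G.Adj j (a + j)} := by
        simp [sum_add_distrib, mul_add, add_assoc]
    _ ≤ #X * Fintype.card V + Fintype.card V * (2 * #X + ν) + Fintype.card V * ν := by
        grw [sum_card_not_adj_add_le G hν]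
    _ = Fintype.card V * (3 * #X + 2 * ν) := by ring

end ApexSum

section DenseGraph

variable {V : Type*} [Fintype V]

theorem card_not_adj_add_degree (G : SimpleGraph V) [DecidableRel G.Adj] (a : V) :
    #{b | ¬ G.Adj a b} + G.degree a = Fintype.card V := by
  rw [← G.card_neighborFinset_eq_degree, G.neighborFinset_eq_filter, add_comm,
    card_filter_add_card_filter_not, card_univ]

variable [DecidableEq V] {G : SimpleGraph V} [DecidableRel G.Adj]

theorem exists_isBalancedApexChoice_badEdges [AddCommMagma V] [IsLeftCancelAdd V] [Nonempty V]
    {ν : ℕ} (hν : ∀ a, #{b | ¬ G.Adj a b} ≤ ν) (hsmall : 1000 * ν ≤ Fintype.card V) :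
    ∃ X k, IsBalancedApexChoice G X (80 * ν) (badEdges G X) k := by
  set n := Fintype.card V
  let X := exceptionalVertices G (n / 10)
  have hν_pos : 0 < ν := by
    obtain ⟨a⟩ := ‹Nonempty V›
    exact (card_pos.2 ⟨a, by simp⟩).trans_le (hν a)
  have hX : #X ≤ 10 * ν := by
    refine Nat.le_of_mul_le_mul_right ?_ (show 0 < n by omega)
    calc #X * n ≤ #X * (10 * (n / 10 + 1)) := Nat.mul_le_mul_left _ (by omega)
      _ = 10 * (#X * (n / 10 + 1)) := by ring
      _ ≤ 10 * (n * ν) := Nat.mul_le_mul_left _ (card_exceptionalVertices_mul_le G hν _)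
      _ = 10 * ν * n := by ring
  have hbad : #(badEdges G X) < (n / 5 + 1) * (80 * ν) := by
    refine Nat.lt_of_mul_lt_mul_left (a := 2) ?_
    calc 2 * #(badEdges G X) ≤ n * (3 * #X + 2 * ν) := two_mul_card_badEdges_le hν
      _ ≤ n * (32 * ν) := Nat.mul_le_mul_left _ (by omega)
      _ < 5 * (n / 5 + 1) * (32 * ν) := Nat.mul_lt_mul_of_pos_right (by omega) (by omega)
      _ = 2 * ((n / 5 + 1) * (80 * ν)) := by ring
  have hdeg : ∀ a ∉ X, #{e ∈ badEdges G X | a ∈ e} + 2 * (80 * ν) ≤ (n + 2) / 3 := by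
    intro a ha
    have hincident := card_badEdges_incident_le hν ha
    have hexc : #{j | ¬ G.Adj j (a + j)} ≤ n / 10 := by simpa [X, exceptionalVertices] using ha
    omega
  exact ⟨X, exists_isBalancedApexChoice hν (s := (n + 2) / 3) (by omega) hdeg hbad (by omega)⟩

theorem exists_isApexChoice_apexLoad_le_three [Nonempty V] {ν : ℕ}
    (hν : ∀ a, #{b | ¬ G.Adj a b} ≤ ν) (hsmall : 1000 * ν ≤ Fintype.card V) :
    ∃ k, IsApexChoice G G.edgeFinset k ∧ ∀ f, apexLoad k G.edgeFinset f ≤ 3 := by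
  -- The ring only supplies a commutative cancellative addition on `V`.
  obtain ⟨_⟩ : Nonempty (CommRing V) := inferInstance
  obtain ⟨X, k, hk⟩ := exists_isBalancedApexChoice_badEdges hν hsmall
  refine ⟨_, hk.isApexChoice.piecewise_badEdges, fun f => (apexLoad_piecewise_le _ _ f).trans ?_⟩
  exact (Nat.add_le_add_right (hk.apexLoad_le f) _).trans (capacity_add_apexLoad_add_le_three G X f)

theorem dense_stmt2_general (G : SimpleGraph V) [DecidableRel G.Adj]
    (hdeg : ∀ v : V, (0.999 : ℝ) * (Fintype.card V : ℝ) ≤ (G.degree v : ℝ)) :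
    TotalWeightChoosable G 1 4 := by
  rcases isEmpty_or_nonempty V with hV | hV
  · exact fun Lv Le _ _ => ⟨isEmptyElim, isEmptyElim, isEmptyElim, isEmptyElim, isEmptyElim⟩
  have hν (a : V) : #{b | ¬ G.Adj a b} ≤ Fintype.card V / 1000 := by
    have hsum : (#{b | ¬ G.Adj a b} + G.degree a : ℝ) = Fintype.card V :=
      mod_cast card_not_adj_add_degree G a
    have hreal : (1000 * #{b | ¬ G.Adj a b} : ℝ) ≤ Fintype.card V := by linarith [hdeg a]
    have hnat : 1000 * #{b | ¬ G.Adj a b} ≤ Fintype.card V := mod_cast hreal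
    omega
  obtain ⟨k, hk, hload⟩ := exists_isApexChoice_apexLoad_le_three hν (Nat.mul_div_le _ _)
  exact hk.totalWeightChoosable hload

end DenseGraph

/-- Every sufficiently large graph with minimum degree at least `0.999 n` is total weight
`(1,4)`-choosable. -/
theorem dense_stmt2 :
    ∃ n₀ : ℕ, ∀ (V : Type) [Fintype V] [DecidableEq V] (G : SimpleGraph V)
      [DecidableRel G.Adj],
      n₀ ≤ Fintype.card V →
      (∀ v : V, (0.999 : ℝ) * (Fintype.card V : ℝ) ≤ (G.degree v : ℝ)) →
      TotalWeightChoosable G 1 4 :=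
  ⟨0, fun _ _ _ G _ _ hdeg => dense_stmt2_general G hdeg⟩
end

section
/- Let A = (a_{ij}) be an m × n matrix with complex entries and let F_A be the polynomial ∏_{i=1}^m (Σ_{j=1}^n a_{ij} x_j) in ℂ[x_1,…,x_n]. Then for every K : {1,…,n} → ℕ with Σ_j K(j) = m, the coefficient of the monomial x^K = ∏_j x_j^{K(j)} in F_A equals per(A(K)) / K!, where K! = ∏_j K(j)!, A(K) is the m × m matrix whose columns consist of K(j) copies of the j-th column of A (for each j), and per denotes the permanent, per(M) = Σ_{σ ∈ S_m} ∏_{i=1}^m M_{i,σ(i)}. -/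
/-!
Expanding `F_A` over all functions `f` from rows to columns gives `∑_f (∏ i, a_{i, f i}) x^{|f|}`,
where `|f|` records the sizes of the fibres of `f`. Dually,
`per(A(K)) = ∑_σ ∏ i, a_{i, c (σ i)}` depends on `σ` only through `f = c ∘ σ`. The functions
`c ∘ σ` are exactly those with `|f| = |c| = K`, and each arises from the `K!` permutations in a
coset of the stabilizer of `c`, which is the product of the symmetric groups on the fibres of `c`.
-/

open scoped BigOperators

/-- The permanent of a square complex matrix. -/
noncomputable def permanent {ι : Type*} [Fintype ι] [DecidableEq ι] (M : Matrix ι ι ℂ) : ℂ :=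
  ∑ σ : Equiv.Perm ι, ∏ i, M i (σ i)

/-- The polynomial `F_A = ∏_{i=1}^m (Σ_{j=1}^n a_{ij} x_j)` associated to an `m × n`
complex matrix `A`. -/
noncomputable def FPoly {m n : ℕ} (A : Matrix (Fin m) (Fin n) ℂ) : MvPolynomial (Fin n) ℂ :=
  ∏ i : Fin m, ∑ j : Fin n, MvPolynomial.C (A i j) * MvPolynomial.X j

section

open Finset
open scoped Nat

variable {ι ι' κ R : Type*} [Fintype ι] [Fintype ι'] [CommSemiring R]

/-- The fibre sizes `j ↦ #{i | f i = j}` of a function `f` on a finite type, used as the exponent of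
the monomial `∏ i, X (f i)`. Encoded as a sum of `Finsupp.single`s, it needs neither finiteness nor
decidable equality of the codomain. -/
noncomputable def fiberCard (f : ι → κ) : κ →₀ ℕ :=
  ∑ i, Finsupp.single (f i) 1

lemma fiberCard_apply [DecidableEq κ] (f : ι → κ) (j : κ) : fiberCard f j = #{i | f i = j} := by
  simp [fiberCard, Finsupp.finsetSum_apply, Finsupp.single_apply]

lemma fiberCard_comp_equiv (f : ι' → κ) (e : ι ≃ ι') : fiberCard (f ∘ e) = fiberCard f :=
  e.sum_comp fun i => Finsupp.single (f i) 1

lemma exists_equiv_comp_eq_iff_fiberCard_eq {f : ι → κ} {g : ι' → κ} :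
    (∃ e : ι ≃ ι', g ∘ e = f) ↔ fiberCard f = fiberCard g := by
  classical
  constructor
  · rintro ⟨e, rfl⟩
    exact fiberCard_comp_equiv g e
  · intro h
    have card_fiber_eq (j : κ) : Fintype.card {i // f i = j} = Fintype.card {i // g i = j} := by
      rw [Fintype.card_subtype, Fintype.card_subtype, ← fiberCard_apply f, ← fiberCard_apply g, h]
    let e (j : κ) : {i // f i = j} ≃ {i // g i = j} := Fintype.equivOfCardEq (card_fiber_eq j)
    exact ⟨Equiv.ofFiberEquiv e, funext (Equiv.ofFiberEquiv_map e)⟩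

lemma image_comp_perm [DecidableEq ι] [Fintype κ] [DecidableEq κ] (c : ι → κ) :
    univ.image (fun σ : Equiv.Perm ι => c ∘ σ)
      = ({f | fiberCard f = fiberCard c} : Finset (ι → κ)) := by
  ext f
  simp [exists_equiv_comp_eq_iff_fiberCard_eq]

lemma card_perm_comp_eq_self [DecidableEq ι] [Fintype κ] [DecidableEq κ] (c : ι → κ) :
    #{σ : Equiv.Perm ι | c ∘ σ = c} = ∏ j, (fiberCard c j)! := by
  simpa only [Fintype.card_subtype, fiberCard_apply] using DomMulAct.stabilizer_card c

lemma card_perm_comp_eq [DecidableEq ι] [Fintype κ] [DecidableEq κ] {c f : ι → κ}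
    (h : fiberCard f = fiberCard c) :
    #{σ : Equiv.Perm ι | c ∘ σ = f} = ∏ j, (fiberCard c j)! := by
  obtain ⟨τ, rfl⟩ := exists_equiv_comp_eq_iff_fiberCard_eq.mpr h
  rw [← card_perm_comp_eq_self]
  refine card_equiv (Equiv.mulRight τ⁻¹) fun σ => ?_
  simp only [mem_filter_univ, Equiv.coe_mulRight, Equiv.Perm.coe_mul, Equiv.Perm.inv_def,
    ← Function.comp_assoc, Equiv.comp_symm_eq]

lemma prod_sum_C_mul_X [DecidableEq ι] [Fintype κ] (A : Matrix ι κ R) :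
    ∏ i, ∑ j, MvPolynomial.C (A i j) * MvPolynomial.X j
      = ∑ f : ι → κ, MvPolynomial.monomial (fiberCard f) (∏ i, A i (f i)) := by
  simp only [MvPolynomial.C_mul_X_eq_monomial, Fintype.prod_sum, fiberCard,
    MvPolynomial.monomial_sum_prod]

lemma coeff_prod_sum_C_mul_X [DecidableEq ι] [Fintype κ] [DecidableEq κ] (A : Matrix ι κ R)
    (K : κ →₀ ℕ) :
    MvPolynomial.coeff K (∏ i, ∑ j, MvPolynomial.C (A i j) * MvPolynomial.X j)
      = ∑ f : ι → κ with fiberCard f = K, ∏ i, A i (f i) := by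
  simp only [prod_sum_C_mul_X, MvPolynomial.coeff_sum, MvPolynomial.coeff_monomial, sum_filter]

lemma permanent_submatrix_id_eq_factorial_mul_sum [DecidableEq ι] [Fintype κ] [DecidableEq κ]
    (A : Matrix ι κ R) (c : ι → κ) :
    (A.submatrix id c).permanent
      = (∏ j, ((fiberCard c j)! : R)) *
          ∑ f : ι → κ with fiberCard f = fiberCard c, ∏ i, A i (f i) := by
  calc (A.submatrix id c).permanent
      = ∑ σ : Equiv.Perm ι, ∏ i, A i ((c ∘ σ) i) := (Matrix.permanent_transpose _).symm
    _ = ∑ f : ι → κ with fiberCard f = fiberCard c,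
          #{σ : Equiv.Perm ι | c ∘ σ = f} • ∏ i, A i (f i) := by
        rw [← image_comp_perm, ← sum_comp (fun f : ι → κ => ∏ i, A i (f i))]
    _ = ∑ f : ι → κ with fiberCard f = fiberCard c,
          (∏ j, ((fiberCard c j)! : R)) * ∏ i, A i (f i) :=
        sum_congr rfl fun f hf => by
          rw [card_perm_comp_eq ((mem_filter_univ f).mp hf), nsmul_eq_mul, Nat.cast_prod]
    _ = (∏ j, ((fiberCard c j)! : R)) *
          ∑ f : ι → κ with fiberCard f = fiberCard c, ∏ i, A i (f i) := (mul_sum ..).symm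

theorem coeff_FPoly_eq_permanent_div_general [DecidableEq ι] [Fintype κ] [DecidableEq κ]
    (A : Matrix ι κ R) (K : κ →₀ ℕ) (c : ι → κ) (hc : ∀ j, #{i | c i = j} = K j) :
    MvPolynomial.coeff K (∏ i, ∑ j, MvPolynomial.C (A i j) * MvPolynomial.X j)
        * ∏ j, ((K j)! : R)
      = (A.submatrix id c).permanent := by
  obtain rfl : fiberCard c = K := Finsupp.ext fun j => (fiberCard_apply c j).trans (hc j)
  rw [coeff_prod_sum_C_mul_X, permanent_submatrix_id_eq_factorial_mul_sum, mul_comm]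

lemma permanent_eq_matrix_permanent [DecidableEq ι] (M : Matrix ι ι ℂ) :
    permanent M = M.permanent :=
  M.permanent_transpose

end

/-- For an `m × n` matrix `A` and `K : Fin n → ℕ` with `Σ_j K j = m`, the coefficient of
`x^K` in `F_A` equals `per(A(K)) / K!`, where `A(K)` is the `m × m` matrix whose columns
consist of `K j` copies of the `j`-th column of `A` (realized via any column-selection
function `c : Fin m → Fin n` taking the value `j` exactly `K j` times). -/
theorem coeff_FPoly_eq_permanent_div {m n : ℕ} (A : Matrix (Fin m) (Fin n) ℂ)
    (K : Fin n → ℕ) (hK : ∑ j, K j = m)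
    (c : Fin m → Fin n)
    (hc : ∀ j : Fin n, (Finset.univ.filter fun p => c p = j).card = K j) :
    MvPolynomial.coeff (Finsupp.equivFunOnFinite.symm K) (FPoly A)
      = permanent (A.submatrix id c) / (∏ j : Fin n, ((K j).factorial : ℂ)) := by
  rw [permanent_eq_matrix_permanent,
    eq_div_iff (by simp [Finset.prod_ne_zero_iff, Nat.factorial_ne_zero])]
  exact coeff_FPoly_eq_permanent_div_general A (Finsupp.equivFunOnFinite.symm K) c hc
end
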